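/- (Hörmander-type L^p-L^q multiplier theorem) Let 1 < p ≤ 2 ≤ q < ∞ and let A be a Fourier multiplier on C^∞(Ω) with symbol σ : L^⊥ → C satisfying K := sup_{s>0} s (#{κ ∈ L^⊥ : |σ(κ)| ≥ s})^{1/p - 1/q} < ∞. Then there is a constant C depending only on p and q such that ‖Af‖_{L^q(Ω)} ≤ C·K·‖f‖_{L^p(Ω)} for all f ∈ C^∞(Ω); in particular A extends to a bounded operator L^p(Ω) → L^q(Ω). -/

import Mathlib

open MeasureTheory Complex Real ENNReal

noncomputable section

/-- The lattice in `ℝ^d` generated by the columns of the matrix `A`, i.e. `A ℤ^d`. -/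
def latticeOf {d : ℕ} (A : Matrix (Fin d) (Fin d) ℝ) : Set (Fin d → ℝ) :=
  {x | ∃ k : Fin d → ℤ, x = A.mulVec (fun i => (k i : ℝ))}

/-- The dual lattice `L^⊥ = {κ : ∀ λ ∈ L, κ·λ ∈ ℤ}`. -/
def dualLattice {d : ℕ} (L : Set (Fin d → ℝ)) : Set (Fin d → ℝ) :=
  {κ | ∀ l ∈ L, ∃ n : ℤ, (∑ i, κ i * l i) = (n : ℝ)}

/-- `Ω` is a (measurable) fundamental domain of `L`: every `x ∈ ℝ^d` is uniquely
`ω + λ` with `ω ∈ Ω`, `λ ∈ L`. -/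
def IsFundDomain {d : ℕ} (L Ω : Set (Fin d → ℝ)) : Prop :=
  MeasurableSet Ω ∧ ∀ x : Fin d → ℝ, ∃! p : (Fin d → ℝ) × (Fin d → ℝ),
    p.1 ∈ Ω ∧ p.2 ∈ L ∧ x = p.1 + p.2

/-- The normalized measure `dx / m(Ω)` on the fundamental domain `Ω`. -/
def normMeasure {d : ℕ} (Ω : Set (Fin d → ℝ)) : Measure (Fin d → ℝ) :=
  (volume Ω)⁻¹ • volume.restrict Ω

/-- The Fourier coefficient `f̂(κ) = (1/m(Ω)) ∫_Ω f(x) e^{-2πi κ·x} dx`. -/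
def fourierCoef {d : ℕ} (Ω : Set (Fin d → ℝ)) (f : (Fin d → ℝ) → ℂ)
    (κ : Fin d → ℝ) : ℂ :=
  ∫ x, f x * Complex.exp (-2 * π * Complex.I * (∑ i, κ i * x i)) ∂(normMeasure Ω)

open scoped NNReal

/-!
The multiplier factors through `ℓ²`. Writing `|σ| = K w ^ (1/p - 1/q)`, the hypothesis says that the
weights `w` lie in weak `ℓ¹`, and `1/p - 1/q = (1/2 - 1/q) + (1/2 - 1/p')` with `p'` conjugate to
`p`. Paley's inequality says that `c ↦ ∑ w_κ ^ (1/2 - 1/q) c_κ e_κ` is bounded from `ℓ²` to `L^q`: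
at height `t` the terms with large weights are bounded by `t / 2` in supremum norm by
Cauchy-Schwarz, the others are controlled by Parseval and Chebyshev, and integrating over `t` gives
the bound. Applied to `p'` and dualized, it shows that `f ↦ w ^ (1/2 - 1/p') f̂` is bounded from
`L^p` to `ℓ²`. Composing the two bounds the partial sums of `A f` uniformly, hence `A f` itself.
The only properties of the characters that matter are `|e_κ| = 1` and orthogonality.
-/

/-! ### Weak-type bounds -/

section WeakBound

variable {ι E : Type*}

/-- The weak-`ℓʳ` bound `#{i | s ≤ ‖σ i‖} ≤ (K / s) ^ r`, written with `γ = 1 / r` in the form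
`s * #{i | s ≤ ‖σ i‖} ^ γ ≤ K`. Symbols satisfy it with `γ = 1 / p - 1 / q`, weights with
`γ = K = 1`. -/
def HasWeakBound [Norm E] (σ : ι → E) (γ : ℝ) (K : ℝ≥0∞) : Prop :=
  ∀ s : ℝ, 0 < s → ENNReal.ofReal s * ({i | s ≤ ‖σ i‖}.encard : ℝ≥0∞) ^ γ ≤ K

/-- The weights `(‖σ i‖ / K) ^ (1 / γ)`, so that `‖σ i‖` is `K` times the power `γ` of a weight.
They lie in weak `ℓ¹` when `σ` satisfies the weak bound with `γ` and `K`. -/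
def symbolWeight [Norm E] (γ : ℝ) (K : ℝ≥0) (σ : ι → E) (i : ι) : ℝ :=
  (‖σ i‖ / K) ^ (1 / γ)

lemma symbolWeight_pos [NormedAddCommGroup E] {γ : ℝ} {K : ℝ≥0} {σ : ι → E} {i : ι} (hK : 0 < K)
    (hi : σ i ≠ 0) : 0 < symbolWeight γ K σ i := by
  unfold symbolWeight
  positivity

lemma mul_symbolWeight_rpow [SeminormedAddCommGroup E] {γ : ℝ} {K : ℝ≥0} (σ : ι → E) (i : ι)
    (hγ : γ ≠ 0) (hK : 0 < K) : K * symbolWeight γ K σ i ^ γ = ‖σ i‖ := by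
  rw [symbolWeight, ← Real.rpow_mul (by positivity), one_div_mul_cancel hγ, Real.rpow_one,
    mul_div_cancel₀ _ (by positivity)]

namespace HasWeakBound

variable {γ : ℝ} {K : ℝ≥0} {S : Finset ι}

section Norm

variable [Norm E] {σ : ι → E}

-- With `γ = 0` the bound reads `s ≤ K` for all `s > 0`, since `0 ^ 0 = 1`.
lemma exponent_ne_zero (h : HasWeakBound σ γ K) : γ ≠ 0 := by
  rintro rfl
  have hle := h (K + 1) (by positivity)
  rw [ENNReal.rpow_zero, mul_one, ENNReal.ofReal_le_coe] at hle
  linarith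

lemma mul_card_rpow_le (h : HasWeakBound σ γ K) (hγ : 0 ≤ γ) {s : ℝ} (hs : 0 < s)
    (hS : ∀ i ∈ S, s ≤ ‖σ i‖) : s * (S.card : ℝ) ^ γ ≤ K := by
  have hcard : (S.card : ℝ≥0∞) ≤ ({i | s ≤ ‖σ i‖}.encard : ℝ≥0∞) := by
    have := Set.encard_le_encard (s := (S : Set ι)) (t := {i | s ≤ ‖σ i‖}) hS
    rw [Set.encard_coe_eq_coe_finsetCard] at this
    exact_mod_cast this
  rw [← ENNReal.ofReal_le_coe, ENNReal.ofReal_mul hs.le,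
    ← ENNReal.ofReal_rpow_of_nonneg (Nat.cast_nonneg _) hγ, ENNReal.ofReal_natCast]
  exact le_trans (by gcongr) (h s hs)

end Norm

lemma norm_le [SeminormedAddCommGroup E] {σ : ι → E} (h : HasWeakBound σ γ K) (hγ : 0 ≤ γ)
    (i : ι) : ‖σ i‖ ≤ K := by
  rcases (norm_nonneg (σ i)).eq_or_lt with h0 | hpos
  · exact h0 ▸ K.coe_nonneg
  · simpa using h.mul_card_rpow_le (S := {i}) hγ hpos (by simp)

lemma hasWeakBound_symbolWeight [SeminormedAddCommGroup E] {σ : ι → E} (h : HasWeakBound σ γ K)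
    (hγ : 0 < γ) (hK : 0 < K) : HasWeakBound (symbolWeight γ K σ) 1 1 := by
  intro s hs
  have hsub : {i | s ≤ ‖(‖σ i‖ / K) ^ (1 / γ)‖} ⊆ {i | K * s ^ γ ≤ ‖σ i‖} := by
    intro i hi
    have hle : s ≤ (‖σ i‖ / K) ^ (1 / γ) := by
      rwa [Set.mem_ofPred_eq, Real.norm_of_nonneg (by positivity)] at hi
    rwa [one_div, Real.le_rpow_inv_iff_of_pos hs.le (by positivity) hγ,
      le_div_iff₀ (by positivity), mul_comm] at hle
  set n : ℝ≥0∞ := ({i | s ≤ ‖(‖σ i‖ / K) ^ (1 / γ)‖}.encard : ℝ≥0∞)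
  have hpow : K * (ENNReal.ofReal s * n) ^ γ ≤ K * 1 := calc
    K * (ENNReal.ofReal s * n) ^ γ = ENNReal.ofReal (K * s ^ γ) * n ^ γ := by
        rw [ENNReal.mul_rpow_of_nonneg _ _ hγ.le, ENNReal.ofReal_mul K.coe_nonneg,
          ENNReal.ofReal_coe_nnreal, ENNReal.ofReal_rpow_of_nonneg hs.le hγ.le, mul_assoc]
    _ ≤ ENNReal.ofReal (K * s ^ γ) * ({i | K * s ^ γ ≤ ‖σ i‖}.encard : ℝ≥0∞) ^ γ := by
        gcongr
        exact ENat.toENNReal_le.2 (Set.encard_le_encard hsub)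
    _ ≤ K * 1 := by simpa using h (K * s ^ γ) (by positivity)
  rw [ENNReal.mul_le_mul_iff_right (by simpa using hK.ne') ENNReal.coe_ne_top,
    ← ENNReal.one_rpow γ, ENNReal.rpow_le_rpow_iff hγ] at hpow
  rwa [ENNReal.rpow_one]

end HasWeakBound

lemma sub_one_rpow_le {m r : ℝ} (hm : 1 ≤ m) (hr0 : 0 ≤ r) (hr1 : r ≤ 1) :
    (m - 1) ^ r ≤ m ^ r - r * m ^ (r - 1) := by
  have hm0 : 0 < m := by linarith
  have hinv : m⁻¹ ≤ 1 := inv_le_one_of_one_le₀ hm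
  calc (m - 1) ^ r = m ^ r * (1 + -m⁻¹) ^ r := by
        rw [← Real.mul_rpow hm0.le (by linarith)]
        congr 1
        field_simp
        ring
    _ ≤ m ^ r * (1 + r * -m⁻¹) := by
        gcongr
        exact rpow_one_add_le_one_add_mul_self (by linarith) hr0 hr1
    _ = m ^ r - r * m ^ (r - 1) := by
        rw [Real.rpow_sub_one hm0.ne']
        ring

namespace HasWeakBound

variable {S : Finset ι} {w : ι → ℝ} {β : ℝ}

lemma card_mul_le_one (hw : HasWeakBound w 1 1) {t : ℝ} (ht : 0 < t) (hS : ∀ i ∈ S, t ≤ w i) :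
    S.card * t ≤ 1 := by
  have := HasWeakBound.mul_card_rpow_le (K := 1) (by simpa using hw) zero_le_one ht
    fun i hi => (hS i hi).trans (Real.le_norm_self _)
  simpa [mul_comm] using this

-- Removing a smallest weight, which is at most `1 / #S`, compares the sum with `∑ n ^ (-β)`.
lemma sum_rpow_le_card_rpow (hw : HasWeakBound w 1 1) (hβ0 : 0 ≤ β) (hβ1 : β < 1)
    (hpos : ∀ i ∈ S, 0 < w i) :
    ∑ i ∈ S, w i ^ β ≤ (S.card : ℝ) ^ (1 - β) / (1 - β) := by
  classical
  have hβ : 0 < 1 - β := by linarith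
  induction S using Finset.induction_on_min_value w with
  | empty => simp [Real.zero_rpow hβ.ne']
  | insert a S ha hmin ih =>
    have hwa : 0 < w a := hpos a (Finset.mem_insert_self a S)
    set m : ℝ := (S.card : ℝ) + 1 with hm
    have hcard : ((insert a S).card : ℝ) = m := by
      rw [Finset.card_insert_of_notMem ha, Nat.cast_add_one]
    have hwa_le : w a ^ β ≤ m ^ (-β) := by
      have hma : m * w a ≤ 1 := hcard ▸ hw.card_mul_le_one hwa (by simpa using hmin)
      rw [Real.rpow_neg (by positivity), ← Real.inv_rpow (by positivity)]
      gcongr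
      rwa [← one_div, le_div_iff₀' (by positivity)]
    calc ∑ i ∈ insert a S, w i ^ β = w a ^ β + ∑ i ∈ S, w i ^ β := Finset.sum_insert ha
      _ ≤ m ^ (-β) + (m - 1) ^ (1 - β) / (1 - β) := by
          gcongr
          simpa [hm] using ih fun i hi => hpos i (Finset.mem_insert_of_mem hi)
      _ ≤ m ^ (-β) + (m ^ (1 - β) - (1 - β) * m ^ (1 - β - 1)) / (1 - β) := by
          gcongr
          exact sub_one_rpow_le (by simp [hm]) hβ.le (by linarith)
      _ = ((insert a S).card : ℝ) ^ (1 - β) / (1 - β) := by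
          rw [hcard, show 1 - β - 1 = -β by ring]
          field_simp
          ring

lemma sum_rpow_le_of_forall_le (hw : HasWeakBound w 1 1) (hβ0 : 0 ≤ β) (hβ1 : β < 1) {l : ℝ}
    (hl : 0 < l) (hS : ∀ i ∈ S, l ≤ w i) :
    ∑ i ∈ S, w i ^ β ≤ l ^ (β - 1) / (1 - β) := by
  have : 0 < 1 - β := by linarith
  have hcard : (S.card : ℝ) ≤ l⁻¹ := by
    rw [← one_div, le_div_iff₀ hl]
    exact hw.card_mul_le_one hl hS
  calc ∑ i ∈ S, w i ^ β ≤ (S.card : ℝ) ^ (1 - β) / (1 - β) :=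
        hw.sum_rpow_le_card_rpow hβ0 hβ1 fun i hi => hl.trans_le (hS i hi)
    _ ≤ l⁻¹ ^ (1 - β) / (1 - β) := by gcongr
    _ = l ^ (β - 1) / (1 - β) := by
        rw [Real.inv_rpow hl.le, ← Real.rpow_neg hl.le, neg_sub]

end HasWeakBound

lemma hasWeakBound_subtype [Norm E] {s : Set ι} {σ : ι → E} {γ : ℝ} {K : ℝ≥0∞} :
    HasWeakBound (fun i : s => σ i) γ K ↔
      ∀ t : ℝ, 0 < t → ENNReal.ofReal t * ({i ∈ s | t ≤ ‖σ i‖}.encard : ℝ≥0∞) ^ γ ≤ K := by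
  have hencard (t : ℝ) : {i : s | t ≤ ‖σ i‖}.encard = {i ∈ s | t ≤ ‖σ i‖}.encard := by
    rw [← Subtype.val_injective.encard_image]
    congr 1
    ext i
    simp [and_comm]
  simp only [HasWeakBound, hencard]

end WeakBound

/-! ### Paley's inequality for unimodular systems -/

lemma lintegral_Ioo_rpow {r T : ℝ} (hr : -1 < r) (hT : 0 ≤ T) :
    ∫⁻ t in Set.Ioo 0 T, ENNReal.ofReal (t ^ r) = ENNReal.ofReal (T ^ (r + 1) / (r + 1)) := by
  have hint : IntegrableOn (fun t : ℝ => t ^ r) (Set.Ioc 0 T) :=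
    (intervalIntegrable_iff_integrableOn_Ioc_of_le hT).1
      (intervalIntegral.intervalIntegrable_rpow' hr)
  have hnonneg : 0 ≤ᵐ[volume.restrict (Set.Ioc 0 T)] fun t : ℝ => t ^ r :=
    (ae_restrict_iff' measurableSet_Ioc).2 (.of_forall fun t ht => Real.rpow_nonneg ht.1.le _)
  rw [setLIntegral_congr Ioo_ae_eq_Ioc, ← ofReal_integral_eq_lintegral_ofReal hint hnonneg,
    ← intervalIntegral.integral_of_le hT, integral_rpow (Or.inl hr),
    Real.zero_rpow (by linarith), sub_zero]

section UnimodularSystem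

variable {X ι : Type*}

/-- The finite expansion `∑ i ∈ S, a i * e i` in the system `e`. -/
def expansion (e : ι → X → ℂ) (S : Finset ι) (a : ι → ℂ) (x : X) : ℂ :=
  ∑ i ∈ S, a i * e i x

/-- The coefficients `c` damped by the power `1 / 2 - 1 / q` of the weights `w`; this is the power
for which Paley's inequality maps `ℓ²` to `L^q`. -/
def paleyCoeff (q : ℝ) (w : ι → ℝ) (c : ι → ℂ) (i : ι) : ℂ :=
  ((w i ^ (1 / 2 - 1 / q) : ℝ) : ℂ) * c i

lemma expansion_paleyCoeff_smul (e : ι → X → ℂ) (S : Finset ι) (q : ℝ) (w : ι → ℝ) (z : ℂ)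
    (c : ι → ℂ) :
    expansion e S (paleyCoeff q w (z • c)) = z • expansion e S (paleyCoeff q w c) := by
  ext x
  simp only [expansion, paleyCoeff, Pi.smul_apply, smul_eq_mul, Finset.mul_sum]
  exact Finset.sum_congr rfl fun i _ => by ring

lemma norm_paleyCoeff {q : ℝ} {w : ι → ℝ} {i : ι} (hi : 0 ≤ w i) (c : ι → ℂ) :
    ‖paleyCoeff q w c i‖ = w i ^ (1 / 2 - 1 / q) * ‖c i‖ := by
  rw [paleyCoeff, norm_mul, Complex.norm_real, Real.norm_of_nonneg (by positivity)]

lemma rpow_half_sub_sq {v : ℝ} (hv : 0 ≤ v) (q : ℝ) :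
    (v ^ (1 / 2 - 1 / q)) ^ 2 = v ^ (1 - 2 / q) := by
  rw [← Real.rpow_mul_natCast hv]
  congr 1
  push_cast
  ring

lemma norm_paleyCoeff_sq {q : ℝ} {w : ι → ℝ} {i : ι} (hi : 0 ≤ w i) (c : ι → ℂ) :
    ‖paleyCoeff q w c i‖ ^ 2 = w i ^ (1 - 2 / q) * ‖c i‖ ^ 2 := by
  rw [norm_paleyCoeff hi, mul_pow, rpow_half_sub_sq hi]

/-- The height `√(2q) * v ^ (-1/q)` below which a weight `v` counts as small in the proof of
Paley's inequality; the factor `√(2q)` makes the large weights contribute at most `t / 2` in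
supremum norm at height `t`. -/
def paleyHeight (q v : ℝ) : ℝ := √(2 * q) * v ^ (-(1 / q))

lemma paleyHeight_pos {q v : ℝ} (hq : 0 < q) (hv : 0 < v) : 0 < paleyHeight q v := by
  unfold paleyHeight
  positivity

lemma paleyHeight_le_iff {q v t : ℝ} (hq : 0 < q) (hv : 0 < v) (ht : 0 < t) :
    paleyHeight q v ≤ t ↔ (t / √(2 * q)) ^ (-q) ≤ v := by
  rw [paleyHeight, ← le_div_iff₀' (by positivity), show -(1 / q) = (-q)⁻¹ by
    rw [one_div, inv_neg], Real.rpow_inv_le_iff_of_neg hv (by positivity) (by linarith)]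

lemma paleyHeight_rpow {q v : ℝ} (hq : 0 < q) (hv : 0 < v) :
    paleyHeight q v ^ (q - 2) = √(2 * q) ^ (q - 2) * (v ^ (1 - 2 / q))⁻¹ := by
  rw [paleyHeight, Real.mul_rpow (by positivity) (by positivity), ← Real.rpow_mul hv.le,
    ← Real.rpow_neg hv.le]
  congr 2
  field_simp

lemma lintegral_indicator_Ioo_paleyHeight {q v : ℝ} (hq : 2 < q) (hv : 0 < v) :
    ∫⁻ t in Set.Ioi 0,
        (Set.Ioo 0 (paleyHeight q v)).indicator (fun s => ENNReal.ofReal (s ^ (q - 3))) t =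
      ENNReal.ofReal (√(2 * q) ^ (q - 2) * (v ^ (1 - 2 / q))⁻¹ / (q - 2)) := by
  have hq0 : 0 < q := by linarith
  rw [setLIntegral_indicator measurableSet_Ioo, Set.inter_eq_left.2 Set.Ioo_subset_Ioi_self,
    lintegral_Ioo_rpow (by linarith) (paleyHeight_pos hq0 hv).le, show q - 3 + 1 = q - 2 by ring,
    paleyHeight_rpow hq0 hv]

lemma sum_rpow_le_of_paleyHeight_le {S : Finset ι} {w : ι → ℝ} {q : ℝ}
    (hw : HasWeakBound w 1 1) (hq : 2 < q) (hpos : ∀ i ∈ S, 0 < w i) {t : ℝ} (ht : 0 < t)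
    (hS : ∀ i ∈ S, paleyHeight q (w i) ≤ t) :
    ∑ i ∈ S, w i ^ (1 - 2 / q) ≤ (t / 2) ^ 2 := by
  have hq0 : 0 < q := by linarith
  have hq1 : 2 / q < 1 := (div_lt_one hq0).2 hq
  calc ∑ i ∈ S, w i ^ (1 - 2 / q)
      ≤ ((t / √(2 * q)) ^ (-q)) ^ (1 - 2 / q - 1) / (1 - (1 - 2 / q)) :=
        hw.sum_rpow_le_of_forall_le (by linarith) (by linarith [div_pos two_pos hq0])
          (by positivity) fun i hi => (paleyHeight_le_iff hq0 (hpos i hi) ht).1 (hS i hi)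
    _ = (t / √(2 * q)) ^ 2 / (2 / q) := by
        rw [← Real.rpow_mul (by positivity), ← Real.rpow_natCast]
        congr 2
        · field_simp
          norm_num
        · ring
    _ = (t / 2) ^ 2 := by
        rw [div_pow, Real.sq_sqrt (by positivity)]
        field_simp

/-- The constant of Paley's inequality `ℓ² → L^q`. The formula for `q > 2` degenerates at
`q = 2`, where Parseval's identity gives the constant `1`. -/
def paleyConst (q : ℝ) : ℝ :=
  if q = 2 then 1 else (q * (4 * √(2 * q) ^ (q - 2) / (q - 2))) ^ (1 / q)

lemma paleyConst_pos {q : ℝ} (hq : 2 ≤ q) : 0 < paleyConst q := by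
  unfold paleyConst
  split_ifs with h
  · exact one_pos
  · have : 0 < q - 2 := sub_pos.2 (lt_of_le_of_ne hq (Ne.symm h))
    positivity

variable [MeasurableSpace X]

/-- A system of functions of constant modulus `1` whose members are pairwise orthogonal in
`L²(μ)`; over a probability measure it is orthonormal. The characters of a compact abelian group
are the main example. -/
structure UnimodularSystem (μ : Measure X) (e : ι → X → ℂ) : Prop where
  aestronglyMeasurable : ∀ i, AEStronglyMeasurable (e i) μ
  norm_eq_one : ∀ i x, ‖e i x‖ = 1
  integral_mul_conj_eq_zero :
    Pairwise fun i j => ∫ x, e i x * (starRingEnd ℂ) (e j x) ∂μ = 0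

/-- The generalized Fourier coefficient `⟨f, e i⟩` of `f` with respect to the system `e`. -/
def systemCoeff (μ : Measure X) (e : ι → X → ℂ) (f : X → ℂ) (i : ι) : ℂ :=
  ∫ x, f x * (starRingEnd ℂ) (e i x) ∂μ

lemma enorm_integral_mul_conj_le {μ : Measure X} {p q : ℝ} (hpq : p.HolderConjugate q)
    {f g : X → ℂ} (hf : AEStronglyMeasurable f μ) (hg : AEStronglyMeasurable g μ) :
    ‖∫ x, f x * (starRingEnd ℂ) (g x) ∂μ‖ₑ ≤
      eLpNorm f (ENNReal.ofReal p) μ * eLpNorm g (ENNReal.ofReal q) μ := by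
  have := hpq.ennrealOfReal
  calc ‖∫ x, f x * (starRingEnd ℂ) (g x) ∂μ‖ₑ
      ≤ ∫⁻ x, ‖f x * (starRingEnd ℂ) (g x)‖ₑ ∂μ := enorm_integral_le_lintegral_enorm _
    _ = eLpNorm (f • g) 1 μ := by
        rw [eLpNorm_one_eq_lintegral_enorm]
        simp [enorm_mul]
    _ ≤ eLpNorm f (ENNReal.ofReal p) μ * eLpNorm g (ENNReal.ofReal q) μ :=
        eLpNorm_smul_le_mul_eLpNorm hg hf

namespace UnimodularSystem

variable {μ : Measure X} {e : ι → X → ℂ} {S : Finset ι}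
  {q : ℝ} {w : ι → ℝ} {c : ι → ℂ}

lemma aestronglyMeasurable_expansion (he : UnimodularSystem μ e) (S : Finset ι) (a : ι → ℂ) :
    AEStronglyMeasurable (expansion e S a) μ :=
  Finset.aestronglyMeasurable_fun_sum S fun i _ => (he.aestronglyMeasurable i).const_mul (a i)

lemma norm_expansion_le_sum_norm (he : UnimodularSystem μ e) (S : Finset ι) (a : ι → ℂ) (x : X) :
    ‖expansion e S a x‖ ≤ ∑ i ∈ S, ‖a i‖ :=
  (norm_sum_le _ _).trans_eq (Finset.sum_congr rfl fun i _ => by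
    rw [norm_mul, he.norm_eq_one, mul_one])

lemma norm_expansion_paleyCoeff_le (he : UnimodularSystem μ e)
    (hpos : ∀ i ∈ S, 0 < w i) (c : ι → ℂ) (x : X) :
    ‖expansion e S (paleyCoeff q w c) x‖ ≤
      √(∑ i ∈ S, w i ^ (1 - 2 / q)) * √(∑ i ∈ S, ‖c i‖ ^ 2) := calc
  ‖expansion e S (paleyCoeff q w c) x‖ ≤ ∑ i ∈ S, w i ^ (1 / 2 - 1 / q) * ‖c i‖ :=
      (he.norm_expansion_le_sum_norm S _ x).trans_eq
        (Finset.sum_congr rfl fun i hi => norm_paleyCoeff (hpos i hi).le c)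
  _ ≤ √(∑ i ∈ S, (w i ^ (1 / 2 - 1 / q)) ^ 2) * √(∑ i ∈ S, ‖c i‖ ^ 2) :=
      Real.sum_mul_le_sqrt_mul_sqrt _ _ _
  _ = √(∑ i ∈ S, w i ^ (1 - 2 / q)) * √(∑ i ∈ S, ‖c i‖ ^ 2) := by
      rw [Finset.sum_congr rfl fun i hi => rpow_half_sub_sq (hpos i hi).le q]

lemma norm_expansion_paleyCoeff_le_half (he : UnimodularSystem μ e) (hw : HasWeakBound w 1 1)
    (hq : 2 < q) (hpos : ∀ i ∈ S, 0 < w i) (hc : ∑ i ∈ S, ‖c i‖ ^ 2 ≤ 1) {t : ℝ} (ht : 0 < t)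
    (hS : ∀ i ∈ S, paleyHeight q (w i) ≤ t) (x : X) :
    ‖expansion e S (paleyCoeff q w c) x‖ ≤ t / 2 := calc
  ‖expansion e S (paleyCoeff q w c) x‖
    ≤ √(∑ i ∈ S, w i ^ (1 - 2 / q)) * √(∑ i ∈ S, ‖c i‖ ^ 2) :=
      he.norm_expansion_paleyCoeff_le hpos c x
  _ ≤ √((t / 2) ^ 2) * √1 := by
      gcongr
      exact sum_rpow_le_of_paleyHeight_le hw hq hpos ht hS
  _ = t / 2 := by rw [Real.sqrt_one, mul_one, Real.sqrt_sq (by positivity)]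

lemma summable_mul_iff (he : UnimodularSystem μ e) {a : ι → ℂ} {x : X} :
    Summable (fun i => a i * e i x) ↔ Summable fun i => ‖a i‖ := by
  rw [← summable_norm_iff]
  simp only [norm_mul, he.norm_eq_one, mul_one]

-- `tsum` takes the value `0` where a series diverges, and the series in a unimodular system
-- converge either everywhere or nowhere.
lemma hasSum_tsum_of_tsum_ne_zero (he : UnimodularSystem μ e) {a : ι → ℂ} {x₀ : X}
    (h : ∑' i, a i * e i x₀ ≠ 0) (x : X) :
    HasSum (fun i => a i * e i x) (∑' i, a i * e i x) := by
  have hx₀ : Summable fun i => a i * e i x₀ :=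
    of_not_not fun hdiv => h (tsum_eq_zero_of_not_summable hdiv)
  exact (he.summable_mul_iff.2 (he.summable_mul_iff.1 hx₀)).hasSum

lemma integrable_mul_conj (he : UnimodularSystem μ e) {f : X → ℂ} (hf : Integrable f μ) (i : ι) :
    Integrable (fun x => f x * (starRingEnd ℂ) (e i x)) μ :=
  hf.mul_bdd (c := 1)
    (Complex.continuous_conj.comp_aestronglyMeasurable (he.aestronglyMeasurable i))
    (.of_forall fun x => by simp [he.norm_eq_one])

lemma integral_mul_conj_expansion (he : UnimodularSystem μ e) {f : X → ℂ} (hf : Integrable f μ)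
    (S : Finset ι) (a : ι → ℂ) :
    ∫ x, f x * (starRingEnd ℂ) (expansion e S a x) ∂μ =
      ∑ i ∈ S, (starRingEnd ℂ) (a i) * systemCoeff μ e f i := by
  have hexpand (x : X) : f x * (starRingEnd ℂ) (expansion e S a x) =
      ∑ i ∈ S, (starRingEnd ℂ) (a i) * (f x * (starRingEnd ℂ) (e i x)) := by
    rw [expansion, map_sum, Finset.mul_sum]
    exact Finset.sum_congr rfl fun i _ => by rw [map_mul]; ring
  simp only [hexpand, systemCoeff]
  rw [integral_finsetSum _ fun i _ => (he.integrable_mul_conj hf i).const_mul _]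
  simp only [integral_const_mul]

variable [IsProbabilityMeasure μ]

lemma memLp (he : UnimodularSystem μ e) (r : ℝ≥0∞) (i : ι) : MemLp (e i) r μ :=
  .of_bound (he.aestronglyMeasurable i) 1 (.of_forall fun x => (he.norm_eq_one i x).le)

lemma orthonormal_toLp (he : UnimodularSystem μ e) :
    Orthonormal ℂ fun i => (he.memLp 2 i).toLp (e i) := by
  refine ⟨fun i => ?_, fun i j hij => ?_⟩
  · have : eLpNorm (e i) 2 μ = eLpNorm (fun _ => (1 : ℂ)) 2 μ :=
      eLpNorm_congr_norm_ae (.of_forall fun x => by simp [he.norm_eq_one])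
    rw [Lp.norm_toLp, this, eLpNorm_const _ two_ne_zero (NeZero.ne μ)]
    simp
  · change inner ℂ ((he.memLp 2 i).toLp (e i)) ((he.memLp 2 j).toLp (e j)) = 0
    rw [L2.inner_def, ← he.integral_mul_conj_eq_zero hij.symm]
    refine integral_congr_ae ?_
    filter_upwards [(he.memLp 2 i).coeFn_toLp, (he.memLp 2 j).coeFn_toLp] with x hi hj
    rw [hi, hj, RCLike.inner_apply]

lemma eLpNorm_two_expansion (he : UnimodularSystem μ e) (S : Finset ι) (a : ι → ℂ) :
    eLpNorm (expansion e S a) 2 μ = ENNReal.ofReal √(∑ i ∈ S, ‖a i‖ ^ 2) := by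
  have hnorm : ‖∑ i ∈ S, a i • (he.memLp 2 i).toLp (e i)‖ ^ 2 = ∑ i ∈ S, ‖a i‖ ^ 2 :=
    he.orthonormal_toLp.orthogonalFamily.norm_sum a S
  have hcoe : ⇑(∑ i ∈ S, a i • (he.memLp 2 i).toLp (e i)) =ᵐ[μ] expansion e S a := by
    have hterm : ∀ᵐ x ∂μ, ∀ i ∈ S, (a i • (he.memLp 2 i).toLp (e i)) x = a i * e i x := by
      refine (Filter.eventually_all_finset S).2 fun i _ => ?_
      filter_upwards [Lp.coeFn_smul (a i) ((he.memLp 2 i).toLp (e i)),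
        (he.memLp 2 i).coeFn_toLp] with x hsmul hx
      rw [hsmul, Pi.smul_apply, hx, smul_eq_mul]
    filter_upwards [Lp.coeFn_finsetSum S fun i => a i • (he.memLp 2 i).toLp (e i), hterm]
      with x hsum hx
    rw [hsum, expansion, Finset.sum_apply, Finset.sum_congr rfl hx]
  rw [← eLpNorm_congr_ae hcoe, ← hnorm, Real.sqrt_sq (norm_nonneg _), ofReal_norm, Lp.enorm_def]

lemma measure_le_norm_expansion_le (he : UnimodularSystem μ e) (S : Finset ι) (a : ι → ℂ) {r : ℝ}
    (hr : 0 < r) :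
    μ {x | r ≤ ‖expansion e S a x‖} ≤ ENNReal.ofReal ((∑ i ∈ S, ‖a i‖ ^ 2) / r ^ 2) := by
  have hcheb := meas_ge_le_mul_pow_eLpNorm_enorm μ two_ne_zero ENNReal.ofNat_ne_top
    (he.aestronglyMeasurable_expansion S a) (ε := ENNReal.ofReal r) (by simpa using hr) (by simp)
  calc μ {x | r ≤ ‖expansion e S a x‖}
      = μ {x | ENNReal.ofReal r ≤ ‖expansion e S a x‖ₑ} := by
        simp only [← ofReal_norm, ENNReal.ofReal_le_ofReal_iff (norm_nonneg _)]
    _ ≤ (ENNReal.ofReal r)⁻¹ ^ 2 * ENNReal.ofReal √(∑ i ∈ S, ‖a i‖ ^ 2) ^ 2 := by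
        simpa [he.eLpNorm_two_expansion] using hcheb
    _ = ENNReal.ofReal ((∑ i ∈ S, ‖a i‖ ^ 2) / r ^ 2) := by
        rw [← ENNReal.ofReal_inv_of_pos hr, ← ENNReal.ofReal_pow (by positivity),
          ← ENNReal.ofReal_pow (by positivity), ← ENNReal.ofReal_mul (by positivity),
          Real.sq_sqrt (Finset.sum_nonneg fun i _ => sq_nonneg _), inv_pow, mul_comm,
          div_eq_mul_inv]

lemma measure_lt_norm_expansion_paleyCoeff_le (he : UnimodularSystem μ e)
    (hw : HasWeakBound w 1 1) (hq : 2 < q) (hpos : ∀ i ∈ S, 0 < w i)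
    (hc : ∑ i ∈ S, ‖c i‖ ^ 2 ≤ 1) {t : ℝ} (ht : 0 < t) :
    μ {x | t < ‖expansion e S (paleyCoeff q w c) x‖} ≤
      ENNReal.ofReal ((∑ i ∈ S with t < paleyHeight q (w i), w i ^ (1 - 2 / q) * ‖c i‖ ^ 2)
        / (t / 2) ^ 2) := by
  classical
  set small : Finset ι := {i ∈ S | t < paleyHeight q (w i)}
  set large : Finset ι := {i ∈ S | ¬ t < paleyHeight q (w i)}
  have hlarge_le (x : X) : ‖expansion e large (paleyCoeff q w c) x‖ ≤ t / 2 :=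
    he.norm_expansion_paleyCoeff_le_half hw hq (fun i hi => hpos i (Finset.mem_filter.1 hi).1)
      ((Finset.sum_le_sum_of_subset_of_nonneg (Finset.filter_subset _ _)
        fun _ _ _ => sq_nonneg _).trans hc) ht (fun i hi => not_lt.1 (Finset.mem_filter.1 hi).2) x
  have hsub : {x | t < ‖expansion e S (paleyCoeff q w c) x‖} ⊆
      {x | t / 2 ≤ ‖expansion e small (paleyCoeff q w c) x‖} := by
    intro x hx
    have hsplit : expansion e S (paleyCoeff q w c) x =
        expansion e small (paleyCoeff q w c) x + expansion e large (paleyCoeff q w c) x :=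
      (Finset.sum_filter_add_sum_filter_not S _ _).symm
    rw [Set.mem_ofPred_eq, hsplit] at hx
    have htri := norm_add_le (expansion e small (paleyCoeff q w c) x)
      (expansion e large (paleyCoeff q w c) x)
    rw [Set.mem_ofPred_eq]
    linarith [hlarge_le x]
  refine (measure_mono hsub).trans
    ((he.measure_le_norm_expansion_le small _ (half_pos ht)).trans_eq ?_)
  rw [Finset.sum_congr rfl fun i hi => norm_paleyCoeff_sq (hpos i (Finset.mem_filter.1 hi).1).le c]

lemma measure_lt_mul_rpow_le_sum_indicator (he : UnimodularSystem μ e)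
    (hw : HasWeakBound w 1 1) (hq : 2 < q) (hpos : ∀ i ∈ S, 0 < w i)
    (hc : ∑ i ∈ S, ‖c i‖ ^ 2 ≤ 1) {t : ℝ} (ht : 0 < t) :
    μ {x | t < ‖expansion e S (paleyCoeff q w c) x‖} * ENNReal.ofReal (t ^ (q - 1)) ≤
      ∑ i ∈ S, ENNReal.ofReal (4 * (w i ^ (1 - 2 / q) * ‖c i‖ ^ 2)) *
        (Set.Ioo 0 (paleyHeight q (w i))).indicator (fun s => ENNReal.ofReal (s ^ (q - 3))) t := by
  have hrpow : t ^ (q - 1) = t ^ (q - 3) * t ^ 2 := by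
    rw [← Real.rpow_natCast, ← Real.rpow_add ht]
    congr 1
    push_cast
    ring
  calc μ {x | t < ‖expansion e S (paleyCoeff q w c) x‖} * ENNReal.ofReal (t ^ (q - 1))
      ≤ ENNReal.ofReal ((∑ i ∈ S with t < paleyHeight q (w i), w i ^ (1 - 2 / q) * ‖c i‖ ^ 2)
          / (t / 2) ^ 2) * ENNReal.ofReal (t ^ (q - 1)) := by
        gcongr
        exact he.measure_lt_norm_expansion_paleyCoeff_le hw hq hpos hc ht
    _ = ENNReal.ofReal (∑ i ∈ S with t < paleyHeight q (w i),
          4 * (w i ^ (1 - 2 / q) * ‖c i‖ ^ 2) * t ^ (q - 3)) := by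
        rw [← ENNReal.ofReal_mul' (by positivity), ← Finset.sum_mul, ← Finset.mul_sum, hrpow]
        congr 1
        field_simp
        ring
    _ = ∑ i ∈ S with t < paleyHeight q (w i),
          ENNReal.ofReal (4 * (w i ^ (1 - 2 / q) * ‖c i‖ ^ 2)) * ENNReal.ofReal (t ^ (q - 3)) := by
        have hnonneg (i : ι) (hi : i ∈ S) : 0 ≤ 4 * (w i ^ (1 - 2 / q) * ‖c i‖ ^ 2) := by
          have := hpos i hi
          positivity
        rw [ENNReal.ofReal_sum_of_nonneg fun i hi =>
          mul_nonneg (hnonneg i (Finset.mem_filter.1 hi).1) (by positivity)]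
        exact Finset.sum_congr rfl fun i hi =>
          ENNReal.ofReal_mul (hnonneg i (Finset.mem_filter.1 hi).1)
    _ = _ := by
        simp only [Finset.sum_filter, Set.indicator_apply, Set.mem_Ioo, ht, true_and, mul_ite,
          mul_zero]

lemma lintegral_norm_expansion_paleyCoeff_rpow_le (he : UnimodularSystem μ e)
    (hw : HasWeakBound w 1 1) (hq : 2 < q) (hpos : ∀ i ∈ S, 0 < w i)
    (hc : ∑ i ∈ S, ‖c i‖ ^ 2 ≤ 1) :
    ∫⁻ x, ENNReal.ofReal (‖expansion e S (paleyCoeff q w c) x‖ ^ q) ∂μ ≤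
      ENNReal.ofReal (q * (4 * √(2 * q) ^ (q - 2) / (q - 2))) := by
  have hq0 : 0 < q := by linarith
  have hq2 : 0 < q - 2 := by linarith
  have hmeas (i : ι) : Measurable ((Set.Ioo 0 (paleyHeight q (w i))).indicator
      fun s : ℝ => ENNReal.ofReal (s ^ (q - 3))) :=
    (measurable_id.pow_const _).ennreal_ofReal.indicator measurableSet_Ioo
  have hterm (i : ι) (hi : i ∈ S) :
      ∫⁻ t in Set.Ioi 0, ENNReal.ofReal (4 * (w i ^ (1 - 2 / q) * ‖c i‖ ^ 2)) *
        (Set.Ioo 0 (paleyHeight q (w i))).indicator (fun s => ENNReal.ofReal (s ^ (q - 3))) t =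
      ENNReal.ofReal (‖c i‖ ^ 2 * (4 * √(2 * q) ^ (q - 2) / (q - 2))) := by
    have hwi : 0 < w i := hpos i hi
    have : w i ^ (1 - 2 / q) ≠ 0 := by positivity
    rw [lintegral_const_mul _ (hmeas i), lintegral_indicator_Ioo_paleyHeight hq hwi,
      ← ENNReal.ofReal_mul (by positivity)]
    congr 1
    field_simp
  rw [lintegral_rpow_eq_lintegral_meas_lt_mul μ (.of_forall fun x => norm_nonneg _)
    (he.aestronglyMeasurable_expansion S _).norm.aemeasurable hq0, ENNReal.ofReal_mul hq0.le]
  gcongr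
  calc ∫⁻ t in Set.Ioi 0, μ {x | t < ‖expansion e S (paleyCoeff q w c) x‖} *
        ENNReal.ofReal (t ^ (q - 1))
      ≤ ∫⁻ t in Set.Ioi 0, ∑ i ∈ S, ENNReal.ofReal (4 * (w i ^ (1 - 2 / q) * ‖c i‖ ^ 2)) *
          (Set.Ioo 0 (paleyHeight q (w i))).indicator (fun s => ENNReal.ofReal (s ^ (q - 3))) t :=
        setLIntegral_mono' measurableSet_Ioi fun t ht =>
          he.measure_lt_mul_rpow_le_sum_indicator hw hq hpos hc ht
    _ = ∑ i ∈ S, ENNReal.ofReal (‖c i‖ ^ 2 * (4 * √(2 * q) ^ (q - 2) / (q - 2))) := by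
        rw [lintegral_finsetSum _ fun i _ => (hmeas i).const_mul _]
        exact Finset.sum_congr rfl hterm
    _ ≤ ENNReal.ofReal (4 * √(2 * q) ^ (q - 2) / (q - 2)) := by
        rw [← ENNReal.ofReal_sum_of_nonneg fun i _ => by positivity, ← Finset.sum_mul]
        exact ENNReal.ofReal_le_ofReal (mul_le_of_le_one_left (by positivity) hc)

lemma eLpNorm_expansion_paleyCoeff_le_of_sum_le_one (he : UnimodularSystem μ e)
    (hw : HasWeakBound w 1 1) (hq : 2 ≤ q) (hpos : ∀ i ∈ S, 0 < w i)
    (hc : ∑ i ∈ S, ‖c i‖ ^ 2 ≤ 1) :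
    eLpNorm (expansion e S (paleyCoeff q w c)) (ENNReal.ofReal q) μ ≤
      ENNReal.ofReal (paleyConst q) := by
  rcases hq.eq_or_lt with rfl | hq2
  · have hcoeff : paleyCoeff 2 w c = c := by ext i; simp [paleyCoeff]
    rw [hcoeff, ENNReal.ofReal_ofNat, he.eLpNorm_two_expansion, paleyConst, if_pos rfl]
    exact ENNReal.ofReal_le_ofReal (Real.sqrt_le_one.2 hc)
  · have hq0 : 0 < q := by linarith
    have : 0 < q - 2 := by linarith
    rw [eLpNorm_eq_lintegral_rpow_enorm_toReal (by simpa using hq0) ENNReal.ofReal_ne_top,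
      ENNReal.toReal_ofReal hq0.le, paleyConst, if_neg hq2.ne',
      ← ENNReal.ofReal_rpow_of_nonneg (by positivity) (by positivity)]
    gcongr
    simpa only [← ofReal_norm, ENNReal.ofReal_rpow_of_nonneg (norm_nonneg _) hq0.le] using
      he.lintegral_norm_expansion_paleyCoeff_rpow_le hw hq2 hpos hc

lemma eLpNorm_expansion_paleyCoeff_le (he : UnimodularSystem μ e) (hw : HasWeakBound w 1 1)
    (hq : 2 ≤ q) (hpos : ∀ i ∈ S, 0 < w i) (c : ι → ℂ) :
    eLpNorm (expansion e S (paleyCoeff q w c)) (ENNReal.ofReal q) μ ≤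
      ENNReal.ofReal (paleyConst q) * ENNReal.ofReal √(∑ i ∈ S, ‖c i‖ ^ 2) := by
  set M : ℝ := √(∑ i ∈ S, ‖c i‖ ^ 2)
  have hM2 : M ^ 2 = ∑ i ∈ S, ‖c i‖ ^ 2 := Real.sq_sqrt (Finset.sum_nonneg fun i _ => sq_nonneg _)
  rcases (show 0 ≤ M from Real.sqrt_nonneg _).eq_or_lt with hM0 | hM0
  · have hc (i : ι) (hi : i ∈ S) : c i = 0 := by
      rw [← hM0, zero_pow two_ne_zero, eq_comm,
        Finset.sum_eq_zero_iff_of_nonneg fun i _ => sq_nonneg _] at hM2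
      simpa using hM2 i hi
    have hzero : expansion e S (paleyCoeff q w c) = 0 := by
      ext x
      exact Finset.sum_eq_zero fun i hi => by simp [paleyCoeff, hc i hi]
    simp [hzero]
  · have hsum : ∑ i ∈ S, ‖((M : ℂ)⁻¹ • c) i‖ ^ 2 ≤ 1 := by
      simp only [Pi.smul_apply, norm_smul, norm_inv, Complex.norm_real, mul_pow, ← Finset.mul_sum,
        ← hM2, Real.norm_of_nonneg hM0.le]
      rw [inv_pow, inv_mul_cancel₀ (by positivity)]
    calc eLpNorm (expansion e S (paleyCoeff q w c)) (ENNReal.ofReal q) μ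
        = ‖(M : ℂ)‖ₑ *
            eLpNorm (expansion e S (paleyCoeff q w ((M : ℂ)⁻¹ • c))) (ENNReal.ofReal q) μ := by
          rw [← eLpNorm_const_smul, ← expansion_paleyCoeff_smul,
            smul_inv_smul₀ (by exact_mod_cast hM0.ne')]
      _ ≤ ENNReal.ofReal M * ENNReal.ofReal (paleyConst q) := by
          rw [← ofReal_norm, Complex.norm_real, Real.norm_of_nonneg hM0.le]
          gcongr
          exact he.eLpNorm_expansion_paleyCoeff_le_of_sum_le_one hw hq hpos hsum
      _ = ENNReal.ofReal (paleyConst q) * ENNReal.ofReal M := mul_comm _ _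

-- Dual to `eLpNorm_expansion_paleyCoeff_le`: pair `f` with the expansion of its own weighted
-- coefficients.
lemma sqrt_sum_norm_paleyCoeff_systemCoeff_le (he : UnimodularSystem μ e) {p : ℝ}
    (hpq : p.HolderConjugate q) (hw : HasWeakBound w 1 1) (hq : 2 ≤ q) (hpos : ∀ i ∈ S, 0 < w i)
    {f : X → ℂ} (hf : MemLp f (ENNReal.ofReal p) μ) :
    ENNReal.ofReal √(∑ i ∈ S, ‖paleyCoeff q w (systemCoeff μ e f) i‖ ^ 2) ≤
      ENNReal.ofReal (paleyConst q) * eLpNorm f (ENNReal.ofReal p) μ := by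
  set c : ι → ℂ := paleyCoeff q w (systemCoeff μ e f) with hc
  set B : ℝ := √(∑ i ∈ S, ‖c i‖ ^ 2)
  have hB0 : 0 ≤ B := Real.sqrt_nonneg _
  have hB2 : B ^ 2 = ∑ i ∈ S, ‖c i‖ ^ 2 := Real.sq_sqrt (Finset.sum_nonneg fun i _ => sq_nonneg _)
  have hpair : ∫ x, f x * (starRingEnd ℂ) (expansion e S (paleyCoeff q w c) x) ∂μ =
      ((B ^ 2 : ℝ) : ℂ) := by
    rw [he.integral_mul_conj_expansion (hf.integrable (by simpa using hpq.lt.le)), hB2]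
    push_cast
    refine Finset.sum_congr rfl fun i _ => ?_
    rw [← Complex.conj_mul', paleyCoeff, map_mul, Complex.conj_ofReal, hc, paleyCoeff]
    ring
  have hmul : ENNReal.ofReal B * ENNReal.ofReal B ≤
      ENNReal.ofReal (paleyConst q) * eLpNorm f (ENNReal.ofReal p) μ * ENNReal.ofReal B := calc
    ENNReal.ofReal B * ENNReal.ofReal B
      = ‖∫ x, f x * (starRingEnd ℂ) (expansion e S (paleyCoeff q w c) x) ∂μ‖ₑ := by
        rw [hpair, ← ofReal_norm, Complex.norm_real, Real.norm_of_nonneg (by positivity),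
          sq, ENNReal.ofReal_mul hB0]
    _ ≤ eLpNorm f (ENNReal.ofReal p) μ *
          eLpNorm (expansion e S (paleyCoeff q w c)) (ENNReal.ofReal q) μ :=
        enorm_integral_mul_conj_le hpq hf.1 (he.aestronglyMeasurable_expansion S _)
    _ ≤ eLpNorm f (ENNReal.ofReal p) μ * (ENNReal.ofReal (paleyConst q) * ENNReal.ofReal B) := by
        gcongr
        exact he.eLpNorm_expansion_paleyCoeff_le hw hq hpos c
    _ = _ := by ring
  rcases hB0.eq_or_lt with hB | hB
  · simp [← hB]
  · exact (ENNReal.mul_le_mul_iff_left (by simpa using hB) ENNReal.ofReal_ne_top).1 hmul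

end UnimodularSystem

/-- The constant `C` of the multiplier theorem: Paley's inequality is used for `q` and, by duality,
for the exponent conjugate to `p`. -/
def multiplierConst (p q : ℝ) : ℝ :=
  paleyConst q * paleyConst p.conjExponent

lemma two_le_conjExponent {p : ℝ} (hp1 : 1 < p) (hp2 : p ≤ 2) : 2 ≤ p.conjExponent := by
  rw [Real.conjExponent, le_div_iff₀ (by linarith)]
  linarith

lemma multiplierConst_pos {p q : ℝ} (hp1 : 1 < p) (hp2 : p ≤ 2) (hq : 2 ≤ q) :
    0 < multiplierConst p q :=
  mul_pos (paleyConst_pos hq) (paleyConst_pos (two_le_conjExponent hp1 hp2))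

-- `1 / p - 1 / q` is the sum of the Paley exponents `1 / 2 - 1 / q` and `1 / 2 - 1 / p'`.
lemma exists_paleyCoeff_factorization {p p' q : ℝ} (hp : p.HolderConjugate p') {K : ℝ≥0}
    {S : Finset ι} {w : ι → ℝ} {σ : ι → ℂ} (hpos : ∀ i ∈ S, 0 < w i)
    (hσ : ∀ i ∈ S, K * w i ^ (1 / p - 1 / q) = ‖σ i‖) (a : ι → ℂ) :
    ∃ c : ι → ℂ, (∀ i ∈ S, paleyCoeff q w c i = σ i * a i) ∧
      ∀ i ∈ S, ‖c i‖ = K * ‖paleyCoeff p' w a i‖ := by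
  refine ⟨fun i => σ i * a i / ((w i ^ (1 / 2 - 1 / q) : ℝ) : ℂ), fun i hi => ?_, fun i hi => ?_⟩
  · have := hpos i hi
    exact mul_div_cancel₀ _ (Complex.ofReal_ne_zero.2 (by positivity))
  · have hwi := hpos i hi
    have hexp : 1 / p - 1 / q = (1 / 2 - 1 / p') + (1 / 2 - 1 / q) := by
      linarith [hp.inv_add_inv_eq_one, one_div p, one_div p']
    have : w i ^ (1 / 2 - 1 / q) ≠ 0 := by positivity
    rw [norm_div, norm_mul, Complex.norm_real, Real.norm_of_nonneg (by positivity), ← hσ i hi,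
      norm_paleyCoeff hwi.le, hexp, Real.rpow_add hwi]
    field_simp

namespace UnimodularSystem

variable {μ : Measure X} [IsProbabilityMeasure μ] {e : ι → X → ℂ} {S : Finset ι} {p q : ℝ}
  {σ : ι → ℂ} {K : ℝ≥0} {f : X → ℂ}

lemma eLpNorm_expansion_mul_systemCoeff_le_of_weight (he : UnimodularSystem μ e) (hp1 : 1 < p)
    (hp2 : p ≤ 2) (hq : 2 ≤ q) {w : ι → ℝ} (hw : HasWeakBound w 1 1) (hpos : ∀ i ∈ S, 0 < w i)
    (hσ : ∀ i ∈ S, K * w i ^ (1 / p - 1 / q) = ‖σ i‖) (hf : MemLp f (ENNReal.ofReal p) μ) :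
    eLpNorm (expansion e S fun i => σ i * systemCoeff μ e f i) (ENNReal.ofReal q) μ ≤
      ENNReal.ofReal (multiplierConst p q) * K * eLpNorm f (ENNReal.ofReal p) μ := by
  have hpp : p.HolderConjugate p.conjExponent := .conjExponent hp1
  obtain ⟨c, hc, hnorm⟩ := exists_paleyCoeff_factorization hpp hpos hσ (systemCoeff μ e f)
  have hexp : (expansion e S fun i => σ i * systemCoeff μ e f i) =
      expansion e S (paleyCoeff q w c) := by
    ext x
    exact Finset.sum_congr rfl fun i hi => by rw [hc i hi]
  have hsqrt : √(∑ i ∈ S, ‖c i‖ ^ 2) =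
      K * √(∑ i ∈ S, ‖paleyCoeff p.conjExponent w (systemCoeff μ e f) i‖ ^ 2) := by
    rw [Finset.sum_congr rfl fun i hi => by rw [hnorm i hi, mul_pow], ← Finset.mul_sum,
      Real.sqrt_mul (by positivity), Real.sqrt_sq K.coe_nonneg]
  calc eLpNorm (expansion e S fun i => σ i * systemCoeff μ e f i) (ENNReal.ofReal q) μ
      ≤ ENNReal.ofReal (paleyConst q) * ENNReal.ofReal √(∑ i ∈ S, ‖c i‖ ^ 2) :=
        hexp ▸ he.eLpNorm_expansion_paleyCoeff_le hw hq hpos c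
    _ ≤ ENNReal.ofReal (paleyConst q) *
          (K * (ENNReal.ofReal (paleyConst p.conjExponent) * eLpNorm f (ENNReal.ofReal p) μ)) := by
        rw [hsqrt, ENNReal.ofReal_mul K.coe_nonneg, ENNReal.ofReal_coe_nnreal]
        gcongr
        exact he.sqrt_sum_norm_paleyCoeff_systemCoeff_le hpp hw (two_le_conjExponent hp1 hp2)
          hpos hf
    _ = ENNReal.ofReal (multiplierConst p q) * K * eLpNorm f (ENNReal.ofReal p) μ := by
        rw [multiplierConst, ENNReal.ofReal_mul (paleyConst_pos hq).le]
        ring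

lemma eLpNorm_expansion_mul_systemCoeff_le (he : UnimodularSystem μ e) (hp1 : 1 < p)
    (hp2 : p ≤ 2) (hq : 2 ≤ q) (hσ : HasWeakBound σ (1 / p - 1 / q) K)
    (hf : MemLp f (ENNReal.ofReal p) μ) (S : Finset ι) :
    eLpNorm (expansion e S fun i => σ i * systemCoeff μ e f i) (ENNReal.ofReal q) μ ≤
      ENNReal.ofReal (multiplierConst p q) * K * eLpNorm f (ENNReal.ofReal p) μ := by
  classical
  have hγ : 0 < 1 / p - 1 / q :=
    lt_of_le_of_ne (sub_nonneg.2 (by gcongr; linarith)) hσ.exponent_ne_zero.symm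
  rcases eq_zero_or_pos K with rfl | hK
  · have hzero : (expansion e S fun i => σ i * systemCoeff μ e f i) = 0 := by
      ext x
      exact Finset.sum_eq_zero fun i _ => by simp [norm_le_zero_iff.1 (hσ.norm_le hγ.le i)]
    simp [hzero]
  · have hsupp : (expansion e S fun i => σ i * systemCoeff μ e f i) =
        expansion e {i ∈ S | σ i ≠ 0} fun i => σ i * systemCoeff μ e f i := by
      ext x
      exact (Finset.sum_filter_of_ne fun i _ => by contrapose!; simp +contextual).symm
    rw [hsupp]
    exact he.eLpNorm_expansion_mul_systemCoeff_le_of_weight hp1 hp2 hq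
      (hσ.hasWeakBound_symbolWeight hγ hK)
      (fun i hi => symbolWeight_pos hK (Finset.mem_filter.1 hi).2)
      (fun i _ => mul_symbolWeight_rpow σ i hγ.ne' hK) hf

lemma eLpNorm_le_of_hasSum (he : UnimodularSystem μ e) {a : ι → ℂ} {g : X → ℂ} {r B : ℝ≥0∞}
    (hr : 1 ≤ r) (hg : ∀ᵐ x ∂μ, HasSum (fun i => a i * e i x) (g x))
    (hB : ∀ S, eLpNorm (expansion e S a) r μ ≤ B) : eLpNorm g r μ ≤ B := by
  refine ENNReal.le_of_forall_pos_le_add fun ε hε _ => ?_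
  obtain ⟨S, hS⟩ : ∃ S : Finset ι, ∑' i : {i // i ∉ S}, ‖a i‖ < ε :=
    ((tendsto_tsum_compl_atTop_zero fun i => ‖a i‖).eventually
      (gt_mem_nhds (NNReal.coe_pos.2 hε))).exists
  have hclose : ∀ᵐ x ∂μ, ‖g x‖ ≤ ‖expansion e S a x‖ + ε := by
    filter_upwards [hg] with x hx
    calc ‖g x‖ = ‖expansion e S a x + ∑' i : {i // i ∉ S}, a i * e i x‖ := by
          rw [← hx.tsum_eq, ← hx.summable.sum_add_tsum_subtype_compl S, expansion]
      _ ≤ ‖expansion e S a x‖ + ∑' i : {i // i ∉ S}, ‖a i * e i x‖ :=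
          norm_add_le_of_le le_rfl (norm_tsum_le_tsum_norm (hx.summable.norm.subtype _))
      _ ≤ ‖expansion e S a x‖ + ε := by
          simp only [norm_mul, he.norm_eq_one, mul_one]
          gcongr
  calc eLpNorm g r μ ≤ eLpNorm ((fun x => ‖expansion e S a x‖) + fun _ => (ε : ℝ)) r μ :=
        eLpNorm_mono_ae_real hclose
    _ ≤ eLpNorm (fun x => ‖expansion e S a x‖) r μ + eLpNorm (fun _ => (ε : ℝ)) r μ :=
        eLpNorm_add_le (he.aestronglyMeasurable_expansion S a).norm aestronglyMeasurable_const hr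
    _ ≤ B + ε := by
        rw [eLpNorm_norm, eLpNorm_const _ (zero_lt_one.trans_le hr).ne' (NeZero.ne μ)]
        simpa using add_le_add_left (hB S) (ε : ℝ≥0∞)

end UnimodularSystem

theorem multiplier_lp_lq_general {μ : Measure X} [IsProbabilityMeasure μ] {e : ι → X → ℂ}
    (he : UnimodularSystem μ e) {p q : ℝ} (hp1 : 1 < p) (hp2 : p ≤ 2) (hq : 2 ≤ q)
    {σ : ι → ℂ} {K : ℝ≥0} (hσ : HasWeakBound σ (1 / p - 1 / q) K)
    {f g : X → ℂ} (hf : MemLp f (ENNReal.ofReal p) μ)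
    (hg : ∀ᵐ x ∂μ, HasSum (fun i => σ i * systemCoeff μ e f i * e i x) (g x)) :
    eLpNorm g (ENNReal.ofReal q) μ ≤
      ENNReal.ofReal (multiplierConst p q) * K * eLpNorm f (ENNReal.ofReal p) μ :=
  he.eLpNorm_le_of_hasSum (by simpa using by linarith) hg
    (he.eLpNorm_expansion_mul_systemCoeff_le hp1 hp2 hq hσ hf)

end UnimodularSystem

/-! ### Characters on a fundamental domain -/

section Lattice

variable {d : ℕ}

/-- The character `x ↦ e^{2πi κ·x}` of `ℝ^d`. -/
def dualChar (κ x : Fin d → ℝ) : ℂ :=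
  Complex.exp (2 * π * Complex.I * (∑ i, κ i * x i))

lemma dualChar_eq_exp_ofReal_mul_I (κ x : Fin d → ℝ) :
    dualChar κ x = Complex.exp ((2 * π * (κ ⬝ᵥ x) : ℝ) * Complex.I) := by
  rw [dualChar, dotProduct]
  push_cast
  ring_nf

lemma norm_dualChar (κ x : Fin d → ℝ) : ‖dualChar κ x‖ = 1 := by
  rw [dualChar_eq_exp_ofReal_mul_I, Complex.norm_exp_ofReal_mul_I]

lemma continuous_dualChar (κ : Fin d → ℝ) : Continuous (dualChar κ) := by
  unfold dualChar
  fun_prop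

lemma dualChar_add (κ x y : Fin d → ℝ) : dualChar κ (x + y) = dualChar κ x * dualChar κ y := by
  simp only [dualChar_eq_exp_ofReal_mul_I, ← Complex.exp_add, dotProduct_add]
  push_cast
  ring_nf

lemma conj_dualChar (κ x : Fin d → ℝ) : (starRingEnd ℂ) (dualChar κ x) =
    Complex.exp (-2 * π * Complex.I * (∑ i, κ i * x i)) := by
  rw [dualChar, ← Complex.exp_conj]
  simp [Complex.conj_ofNat]

lemma dualChar_mul_conj (κ η x : Fin d → ℝ) :
    dualChar κ x * (starRingEnd ℂ) (dualChar η x) = dualChar (κ - η) x := by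
  simp only [dualChar_eq_exp_ofReal_mul_I, ← Complex.exp_conj, ← Complex.exp_add, sub_dotProduct,
    map_mul, Complex.conj_ofReal, Complex.conj_I]
  push_cast
  ring_nf

lemma dualChar_eq_one {L : Set (Fin d → ℝ)} {κ l : Fin d → ℝ} (hκ : κ ∈ dualLattice L)
    (hl : l ∈ L) : dualChar κ l = 1 := by
  obtain ⟨n, hn⟩ := hκ l hl
  rw [dualChar_eq_exp_ofReal_mul_I, dotProduct, hn, Complex.exp_eq_one_iff]
  exact ⟨n, by push_cast; ring⟩

lemma exists_dualChar_eq_neg_one {κ : Fin d → ℝ} (hκ : κ ≠ 0) : ∃ v, dualChar κ v = -1 := by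
  have hne : κ ⬝ᵥ κ ≠ 0 := dotProduct_self_eq_zero.not.2 hκ
  refine ⟨(2 * (κ ⬝ᵥ κ))⁻¹ • κ, ?_⟩
  rw [dualChar_eq_exp_ofReal_mul_I, dotProduct_smul, smul_eq_mul, ← Complex.exp_pi_mul_I]
  congr 3
  field_simp

lemma sub_mem_dualLattice {L : Set (Fin d → ℝ)} {κ η : Fin d → ℝ} (hκ : κ ∈ dualLattice L)
    (hη : η ∈ dualLattice L) : κ - η ∈ dualLattice L := by
  intro l hl
  obtain ⟨m, hm⟩ := hκ l hl
  obtain ⟨n, hn⟩ := hη l hl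
  exact ⟨m - n, by simp [sub_mul, Finset.sum_sub_distrib, hm, hn]⟩

lemma fourierCoef_eq_systemCoeff (Ω : Set (Fin d → ℝ)) (f : (Fin d → ℝ) → ℂ)
    {s : Set (Fin d → ℝ)} (κ : s) :
    fourierCoef Ω f κ =
      systemCoeff (normMeasure Ω) (fun η : s => dualChar (η : Fin d → ℝ)) f κ := by
  simp only [systemCoeff, conj_dualChar, fourierCoef]

instance countable_span_range_basis {ι : Type*} [Finite ι] {b : Module.Basis ι ℝ (Fin d → ℝ)} :
    Countable (Submodule.span ℤ (Set.range b)).toAddSubgroup :=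
  inferInstanceAs (Countable (Submodule.span ℤ (Set.range b)))

open scoped Pointwise

namespace IsFundDomain

variable {Ω : Set (Fin d → ℝ)}

section AddSubgroup

variable {L : AddSubgroup (Fin d → ℝ)}

lemma isAddFundamentalDomain (h : IsFundDomain L Ω) : IsAddFundamentalDomain L Ω volume := by
  refine .mk' h.1.nullMeasurableSet fun x => ?_
  obtain ⟨⟨ω, l⟩, ⟨hω, hl, rfl⟩, huniq⟩ := h.2 x
  refine ⟨⟨-l, neg_mem hl⟩, ?_, ?_⟩
  · simpa [AddSubgroup.vadd_def] using hω
  · rintro ⟨v, hv⟩ hvΩ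
    have := huniq (v + (ω + l), -v) ⟨hvΩ, neg_mem hv, by simp⟩
    exact Subtype.ext (neg_eq_iff_eq_neg.1 (congrArg Prod.snd this))

variable [Countable L]

lemma volume_ne_zero (h : IsFundDomain L Ω) : volume Ω ≠ 0 :=
  h.isAddFundamentalDomain.measure_ne_zero (NeZero.ne _)

-- Translating `Ω` by a vector on which the character is `-1` changes the sign of the integral.
lemma setIntegral_dualChar (h : IsFundDomain L Ω) {κ : Fin d → ℝ}
    (hκ : κ ∈ dualLattice (L : Set (Fin d → ℝ))) (h0 : κ ≠ 0) : ∫ x in Ω, dualChar κ x = 0 := by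
  obtain ⟨v, hv⟩ := exists_dualChar_eq_neg_one h0
  have hΩ := h.isAddFundamentalDomain
  have hinv (l : L) (x : Fin d → ℝ) : dualChar κ (l +ᵥ x) = dualChar κ x := by
    rw [AddSubgroup.vadd_def, vadd_eq_add, dualChar_add, dualChar_eq_one hκ l.2, one_mul]
  have hneg : ∫ x in Ω, dualChar κ x = -∫ x in Ω, dualChar κ x := calc
    ∫ x in Ω, dualChar κ x = ∫ x in v +ᵥ Ω, dualChar κ x :=
        hΩ.setIntegral_eq (hΩ.vadd_of_comm v) hinv
    _ = ∫ x in Ω, dualChar κ (v +ᵥ x) := by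
        rw [← Set.image_vadd, (measurePreserving_vadd v volume).setIntegral_image_emb
          (measurableEmbedding_const_vadd v)]
    _ = -∫ x in Ω, dualChar κ x := by
        simp only [vadd_eq_add, dualChar_add, hv, neg_one_mul, integral_neg]
  exact self_eq_neg.1 hneg

lemma unimodularSystem_dualChar (h : IsFundDomain L Ω) :
    UnimodularSystem (normMeasure Ω)
      fun κ : dualLattice (L : Set (Fin d → ℝ)) => dualChar (κ : Fin d → ℝ) where
  aestronglyMeasurable κ := (continuous_dualChar _).aestronglyMeasurable
  norm_eq_one κ := norm_dualChar _
  integral_mul_conj_eq_zero κ η hne := by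
    have h0 : (κ : Fin d → ℝ) - η ≠ 0 := sub_ne_zero.2 (Subtype.coe_injective.ne hne)
    simp only [dualChar_mul_conj, normMeasure, integral_smul_measure,
      h.setIntegral_dualChar (sub_mem_dualLattice κ.2 η.2) h0, smul_zero]

end AddSubgroup

variable {ι : Type*} [Finite ι] {b : Module.Basis ι ℝ (Fin d → ℝ)}

lemma volume_ne_top (h : IsFundDomain (Submodule.span ℤ (Set.range b)).toAddSubgroup Ω) :
    volume Ω ≠ ⊤ := by
  rw [h.isAddFundamentalDomain.measure_eq (ZSpan.isAddFundamentalDomain' b volume)]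
  exact (ZSpan.fundamentalDomain_isBounded b).measure_lt_top.ne

lemma isProbabilityMeasure_normMeasure
    (h : IsFundDomain (Submodule.span ℤ (Set.range b)).toAddSubgroup Ω) :
    IsProbabilityMeasure (normMeasure Ω) :=
  ProbabilityTheory.cond_isProbabilityMeasure_of_finite h.volume_ne_zero h.volume_ne_top

end IsFundDomain

lemma exists_norm_le_of_periodic {ι V E : Type*} [Finite ι] [NormedAddCommGroup V]
    [NormedSpace ℝ V] [ProperSpace V] [SeminormedAddCommGroup E] (b : Module.Basis ι ℝ V)
    {f : V → E} (hf : Continuous f)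
    (hper : ∀ x, ∀ l ∈ Submodule.span ℤ (Set.range b), f (x + l) = f x) :
    ∃ C, ∀ x, ‖f x‖ ≤ C := by
  have := Fintype.ofFinite ι
  obtain ⟨C, hC⟩ : ∃ C, ∀ x ∈ closure (ZSpan.fundamentalDomain b), ‖f x‖ ≤ C :=
    (ZSpan.fundamentalDomain_isBounded b).isCompact_closure.exists_bound_of_continuousOn
      hf.continuousOn
  refine ⟨C, fun x => ?_⟩
  have hx : f x = f (ZSpan.fract b x) := by
    rw [← hper (ZSpan.fract b x) _ (ZSpan.floor b x).2, ZSpan.fract_apply, sub_add_cancel]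
  exact hx ▸ hC _ (subset_closure (ZSpan.fract_mem_fundamentalDomain b x))

lemma IsFundDomain.memLp_of_periodic {ι E : Type*} [Finite ι] [NormedAddCommGroup E]
    {Ω : Set (Fin d → ℝ)} {b : Module.Basis ι ℝ (Fin d → ℝ)}
    (h : IsFundDomain (Submodule.span ℤ (Set.range b)).toAddSubgroup Ω) {f : (Fin d → ℝ) → E}
    (hf : Continuous f) (hper : ∀ x, ∀ l ∈ Submodule.span ℤ (Set.range b), f (x + l) = f x)
    (r : ℝ≥0∞) : MemLp f r (normMeasure Ω) := by
  have := h.isProbabilityMeasure_normMeasure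
  obtain ⟨C, hC⟩ := exists_norm_le_of_periodic b hf hper
  exact .of_bound hf.aestronglyMeasurable C (.of_forall hC)

lemma exists_basis_span_eq_latticeOf {A : Matrix (Fin d) (Fin d) ℝ} (hA : IsUnit A.det) :
    ∃ b : Module.Basis (Fin d) ℝ (Fin d → ℝ),
      latticeOf A = (Submodule.span ℤ (Set.range b)).toAddSubgroup := by
  let b := (Pi.basisFun ℝ (Fin d)).map (A.toLinearEquiv' (A.invertibleOfIsUnitDet hA))
  refine ⟨b, Set.ext fun x => ?_⟩
  have hsum (k : Fin d → ℤ) : ∑ i, k i • b i = A.mulVec fun i => (k i : ℝ) := by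
    have hb (i : Fin d) : b i = A.mulVec (Pi.single i 1) := by
      simp [b, Matrix.toLinearEquiv']
    simp only [hb, ← Matrix.mulVec_smul, ← Matrix.mulVec_sum]
    congr 1
    ext j
    simp [Finset.sum_apply, Pi.single_apply]
  simp only [Submodule.coe_toAddSubgroup, SetLike.mem_coe,
    Submodule.mem_span_range_iff_exists_fun, hsum, eq_comm (b := x)]
  rfl

end Lattice

theorem multiplier_lp_lq (p q : ℝ) (hp1 : 1 < p) (hp2 : p ≤ 2) (hq : 2 ≤ q) :
    ∃ C : ℝ, 0 < C ∧ ∀ (d : ℕ) (A : Matrix (Fin d) (Fin d) ℝ), IsUnit A.det →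
      ∀ (Ω : Set (Fin d → ℝ)), IsFundDomain (latticeOf A) Ω →
      ∀ (σ : (Fin d → ℝ) → ℂ) (K : ℝ≥0∞), K ≠ ⊤ →
      (∀ s : ℝ, 0 < s →
        ENNReal.ofReal s *
          ({κ ∈ dualLattice (latticeOf A) | s ≤ ‖σ κ‖}.encard : ℝ≥0∞) ^ (1 / p - 1 / q) ≤ K) →
      ∀ (f g : (Fin d → ℝ) → ℂ), ContDiff ℝ (⊤ : ℕ∞) f →
      (∀ x : Fin d → ℝ, ∀ l ∈ latticeOf A, f (x + l) = f x) →
      (∀ x : Fin d → ℝ, g x = ∑' κ : dualLattice (latticeOf A),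
          σ ↑κ * fourierCoef Ω f ↑κ *
            Complex.exp (2 * π * Complex.I * (∑ i, (κ : Fin d → ℝ) i * x i))) →
      eLpNorm g (ENNReal.ofReal q) (normMeasure Ω)
        ≤ ENNReal.ofReal C * K * eLpNorm f (ENNReal.ofReal p) (normMeasure Ω) := by
  refine ⟨multiplierConst p q, multiplierConst_pos hp1 hp2 hq, ?_⟩
  intro d A hA Ω
  obtain ⟨b, hb⟩ := exists_basis_span_eq_latticeOf hA
  rw [hb]
  intro hΩ σ K hK hσ f g hf hper hg
  lift K to ℝ≥0 using hK
  have := hΩ.isProbabilityMeasure_normMeasure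
  have he := hΩ.unimodularSystem_dualChar
  rcases eq_or_ne g 0 with rfl | hg0
  · simp
  obtain ⟨x₀, hx₀⟩ := Function.ne_iff.1 hg0
  simp only [fourierCoef_eq_systemCoeff] at hg
  refine multiplier_lp_lq_general he hp1 hp2 hq (hasWeakBound_subtype.2 hσ)
    (hΩ.memLp_of_periodic hf.continuous hper _)
    (.of_forall fun x => hg x ▸ he.hasSum_tsum_of_tsum_ne_zero (x₀ := x₀) ?_ x)
  exact (hg x₀).symm.trans_ne hx₀
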